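/- Let q be a power of a prime p, let k, f be positive integers with f | k, f > 1 and gcd(k/f, q−1) = 1, let a ∈ F_q^*, and let D = {x ∈ F_{q^k} : Tr_{q^f/q}(x^{(q^k−1)/(q^f−1)}) + a = 0}. Let χ₁ be the canonical additive character of F_{q^f} and let φ be a multiplicative character of F_{q^f}^* of order (q^f−1)/(q−1). Then for every b ∈ F_{q^k}^*, the Hamming weight w(c_b) = #{d ∈ D : Tr_{q^k/q}(b d) ≠ 0} satisfies (as an equality of complex numbers) w(c_b) = (q−1)q^{f+k−2}/(q^f−1) + ((−1)^{k/f−1}(q−1)q^{f−2}/(q^f−1)) · Σ_{j=1}^{(q^f−1)/(q−1) − 1} φ^j(−1) G(φ^j, χ₁)^{k/f − 1} conj(φ^j)(b^{(q^k−1)/(q^f−1)}). -/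

import Mathlib

open scoped BigOperators

/-!
Let `K / F / E` be the tower `F_{q^k} / F_{q^f} / F_q`. Scaling by `y ∈ Eˣ` multiplies
`Tr_{F/E} (N_{K/F} d)` by `y ^ [K : F]`, and since `[K : F]` is coprime to `q - 1` this permutes
the nonzero level sets transitively, while preserving the condition `Tr_{K/E} (b d) ≠ 0`. The
weight is therefore `1 / (q - 1)` times a count over all `d` with `Tr (N d) ≠ 0`, and orthogonality
of additive characters reduces that count to the double sum of `χ (y N d) χ_K (b d)` over `y ∈ Eˣ`
and `d ∈ K`, where `χ` is the lift to `F` of a nontrivial additive character of `E` and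
`χ_K = χ ∘ Tr_{K/F}`.

The powers of `φ` are exactly the characters of `Fˣ` that are trivial on `Eˣ`, so the sum over `y`
can be expanded in the Gauss sums `G(φʲ, χ)`. The remaining sums over `d` are Gauss sums over `K`
of characters lifted through the norm and trace, which the Hasse–Davenport relation evaluates, up
to sign, as powers of the `G(φʲ, χ)`. That relation is read off from the L-function
`L(T) = ∑ f, λ(f) T ^ deg f` over the monic polynomials over `F`, where `λ(f) = φʲ(∏ xᵢ) χ(∑ xᵢ)`
for `f = ∏ (X - xᵢ)`: it equals `1 + G(φʲ, χ) T`, and the coefficient of `Tⁿ` in `T L' / L` is the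
Gauss sum over the extension of degree `n`.
-/

namespace HasseDavenport

open Polynomial UniqueFactorizationMonoid Finset

section Weight

variable {A R : Type*} [CommRing A] [CommRing R]

/-- The multiplicative weight of a monic polynomial `f` whose sums over the monic polynomials of
each degree are the coefficients of the L-function of `(χ, ψ)`: if `f = ∏ (X - xᵢ)`, it is
`χ (∏ xᵢ) ψ (∑ xᵢ)`. -/
noncomputable def charWeight (χ : MulChar A R) (ψ : AddChar A R) (f : A[X]) : R :=
  χ ((-1) ^ f.natDegree * f.coeff 0) * ψ (-f.nextCoeff)

lemma charWeight_one (χ : MulChar A R) (ψ : AddChar A R) : charWeight χ ψ 1 = 1 := by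
  have h : (1 : A[X]).nextCoeff = 0 := nextCoeff_C_eq_zero 1
  simp [charWeight, h]

lemma charWeight_X_sub_C [Nontrivial A] (χ : MulChar A R) (ψ : AddChar A R) (c : A) :
    charWeight χ ψ (X - C c) = χ c * ψ c := by
  simp [charWeight, nextCoeff_X_sub_C]

lemma charWeight_mul (χ : MulChar A R) (ψ : AddChar A R) {f g : A[X]} (hf : f.Monic)
    (hg : g.Monic) : charWeight χ ψ (f * g) = charWeight χ ψ f * charWeight χ ψ g := by
  unfold charWeight
  rw [hf.nextCoeff_mul hg, hf.natDegree_mul hg, mul_coeff_zero, neg_add, AddChar.map_add_eq_mul,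
    pow_add, mul_mul_mul_comm, map_mul, mul_mul_mul_comm]

lemma charWeight_pow (χ : MulChar A R) (ψ : AddChar A R) {f : A[X]} (hf : f.Monic) (r : ℕ) :
    charWeight χ ψ (f ^ r) = charWeight χ ψ f ^ r := by
  induction r with
  | zero => simp [charWeight_one]
  | succ r ih => rw [pow_succ, charWeight_mul χ ψ (hf.pow r) hf, ih, pow_succ]

lemma charWeight_add_C_mul_X_pow (χ : MulChar A R) (ψ : AddChar A R) {f : A[X]} {n : ℕ} (t : A)
    (hf : f.natDegree = n + 2) :
    charWeight χ ψ (f + C t * X ^ (n + 1)) = ψ (-t) * charWeight χ ψ f := by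
  have hlt : (C t * X ^ (n + 1)).natDegree < f.natDegree := by
    rw [hf]
    exact (natDegree_C_mul_X_pow_le _ _).trans_lt (n + 1).lt_succ_self
  have hdeg : (f + C t * X ^ (n + 1)).natDegree = n + 2 := by
    rw [natDegree_add_eq_left_of_natDegree_lt hlt, hf]
  have hnext : (f + C t * X ^ (n + 1)).nextCoeff = f.nextCoeff + t := by
    rw [nextCoeff_of_natDegree_pos (by omega), nextCoeff_of_natDegree_pos (by omega), hdeg, hf]
    simp
  have hzero : (f + C t * X ^ (n + 1)).coeff 0 = f.coeff 0 := by simp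
  rw [charWeight, charWeight, hdeg, hnext, hzero, hf, neg_add, AddChar.map_add_eq_mul]
  ring

end Weight

section MonicsOfDegree

variable {A R : Type*} [CommRing A] [CommRing R]

lemma finite_setOf_monic_natDegree_eq (A : Type*) [CommRing A] [Finite A] (n : ℕ) :
    {f : A[X] | f.Monic ∧ f.natDegree = n}.Finite := by
  have : Finite (degreeLT A (n + 1)) := Finite.of_injective _ (degreeLTEquiv A (n + 1)).injective
  refine (degreeLT A (n + 1) : Set A[X]).toFinite.subset fun f hf => ?_
  rw [SetLike.mem_coe, mem_degreeLT]
  exact degree_le_natDegree.trans_lt (by exact_mod_cast hf.2.trans_lt n.lt_succ_self)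

/-- The finite set of monic polynomials of degree `n` over a finite ring. -/
noncomputable def monicsOfDegree (A : Type*) [CommRing A] [Finite A] (n : ℕ) : Finset A[X] :=
  (finite_setOf_monic_natDegree_eq A n).toFinset

lemma mem_monicsOfDegree [Finite A] {n : ℕ} {f : A[X]} :
    f ∈ monicsOfDegree A n ↔ f.Monic ∧ f.natDegree = n := by
  simp [monicsOfDegree]

lemma monicsOfDegree_zero [Nontrivial A] [Finite A] : monicsOfDegree A 0 = {1} := by
  ext f
  rw [mem_monicsOfDegree, mem_singleton]
  refine ⟨fun h => h.1.natDegree_eq_zero.1 h.2, ?_⟩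
  rintro rfl
  exact ⟨monic_one, natDegree_one⟩

lemma add_C_mul_X_pow_mem_monicsOfDegree [Nontrivial A] [Finite A] {n : ℕ} {f : A[X]} (t : A)
    (hf : f ∈ monicsOfDegree A (n + 1)) : f + C t * X ^ n ∈ monicsOfDegree A (n + 1) := by
  obtain ⟨hmonic, hdeg⟩ := mem_monicsOfDegree.1 hf
  have hlt : (C t * X ^ n).degree < f.degree := by
    rw [degree_eq_natDegree hmonic.ne_zero, hdeg]
    exact (degree_C_mul_X_pow_le _ _).trans_lt (by exact_mod_cast n.lt_succ_self)
  exact mem_monicsOfDegree.2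
    ⟨hmonic.add_of_left hlt, by rw [natDegree_add_eq_left_of_degree_lt hlt, hdeg]⟩

/-- The coefficient of `Tⁿ` in the L-function `∑ f, charWeight χ ψ f * T ^ f.natDegree`, the sum
being over all monic polynomials `f`. -/
noncomputable def lCoeff [Finite A] (χ : MulChar A R) (ψ : AddChar A R) (n : ℕ) : R :=
  ∑ f ∈ monicsOfDegree A n, charWeight χ ψ f

lemma lCoeff_zero [Nontrivial A] [Finite A] (χ : MulChar A R) (ψ : AddChar A R) :
    lCoeff χ ψ 0 = 1 := by
  rw [lCoeff, monicsOfDegree_zero, sum_singleton, charWeight_one]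

lemma lCoeff_one [Nontrivial A] [Fintype A] (χ : MulChar A R) (ψ : AddChar A R) :
    lCoeff χ ψ 1 = gaussSum χ ψ := by
  symm
  refine sum_bij (fun c _ => X - C c) (fun c _ => ?_) (fun c _ d _ h => ?_) (fun f hf => ?_)
    fun c _ => (charWeight_X_sub_C χ ψ c).symm
  · exact mem_monicsOfDegree.2 ⟨monic_X_sub_C c, natDegree_X_sub_C c⟩
  · exact C_injective (sub_right_injective h)
  · obtain ⟨hmonic, hdeg⟩ := mem_monicsOfDegree.1 hf
    exact ⟨-f.coeff 0, mem_univ _, by rw [C_neg, sub_neg_eq_add, hmonic.eq_X_add_C hdeg]; simp⟩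

lemma lCoeff_add_two [Nontrivial A] [Finite A] [IsDomain R] (χ : MulChar A R)
    {ψ : AddChar A R} (hψ : ψ ≠ 1) (n : ℕ) : lCoeff χ ψ (n + 2) = 0 := by
  obtain ⟨t, ht⟩ := AddChar.ne_one_iff.1 hψ
  have hshift : ψ t * lCoeff χ ψ (n + 2) = lCoeff χ ψ (n + 2) := by
    rw [lCoeff, mul_sum]
    refine sum_bij' (fun f _ => f + C (-t) * X ^ (n + 1)) (fun f _ => f + C t * X ^ (n + 1))
      (fun f hf => add_C_mul_X_pow_mem_monicsOfDegree _ hf)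
      (fun f hf => add_C_mul_X_pow_mem_monicsOfDegree _ hf) (by simp) (by simp) fun f hf => ?_
    rw [charWeight_add_C_mul_X_pow χ ψ _ (mem_monicsOfDegree.1 hf).2, neg_neg]
  exact (mul_left_eq_self₀.1 hshift).resolve_left ht

lemma sum_charWeight_filter_dvd [Finite A] (χ : MulChar A R) (ψ : AddChar A R) {i n : ℕ}
    (hi : i ≤ n) {g : A[X]} (hg : g ∈ monicsOfDegree A i) [DecidablePred (g ∣ · : A[X] → Prop)] :
    ∑ f ∈ monicsOfDegree A n with g ∣ f, charWeight χ ψ f =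
      charWeight χ ψ g * lCoeff χ ψ (n - i) := by
  obtain ⟨hmonic, hdeg⟩ := mem_monicsOfDegree.1 hg
  rw [lCoeff, mul_sum]
  symm
  refine sum_bij (fun h _ => g * h) (fun h hh => ?_)
    (fun _ _ _ _ h => hmonic.isRegular.left h) (fun f hf => ?_) (fun h hh => ?_)
  · obtain ⟨hh, hdeg'⟩ := mem_monicsOfDegree.1 hh
    rw [mem_filter, mem_monicsOfDegree, hmonic.natDegree_mul hh]
    exact ⟨⟨hmonic.mul hh, by omega⟩, dvd_mul_right _ _⟩
  · obtain ⟨hf, h, rfl⟩ := mem_filter.1 hf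
    obtain ⟨hgh, hdeg'⟩ := mem_monicsOfDegree.1 hf
    have hh := hmonic.of_mul_monic_left hgh
    rw [hmonic.natDegree_mul hh] at hdeg'
    exact ⟨h, mem_monicsOfDegree.2 ⟨hh, by omega⟩, rfl⟩
  · rw [charWeight_mul χ ψ hmonic (mem_monicsOfDegree.1 hh).1]

end MonicsOfDegree

section VonMangoldt

variable {F : Type*} [Field F]

open Classical in
/-- The von Mangoldt function on polynomials: `deg P` at the powers `P ^ r`, `r ≥ 1`, of an
irreducible polynomial `P`, and `0` elsewhere. -/
noncomputable def polyVonMangoldt (g : F[X]) : ℕ :=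
  if IsPrimePow g then (radical g).natDegree else 0

lemma polyVonMangoldt_eq_zero {g : F[X]} (hg : ¬IsPrimePow g) : polyVonMangoldt g = 0 :=
  if_neg hg

lemma polyVonMangoldt_pow {P : F[X]} (hP : P.Monic) (hirr : Irreducible P) {r : ℕ} (hr : r ≠ 0) :
    polyVonMangoldt (P ^ r) = P.natDegree := by
  classical
  rw [polyVonMangoldt, if_pos (hirr.prime.isPrimePow.pow hr),
    radical_pow_of_prime hirr.prime hr, hP.normalize_eq_self]

lemma exists_monic_irreducible_pow_eq {g : F[X]} (hg : g.Monic) (hpow : IsPrimePow g) :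
    ∃ (P : F[X]) (r : ℕ), P.Monic ∧ Irreducible P ∧ r ≠ 0 ∧ P ^ r = g := by
  classical
  obtain ⟨Q, r, hQ, hr, rfl⟩ := hpow
  refine ⟨normalize Q, r, monic_normalize hQ.ne_zero,
    ((normalize_associated Q).irreducible_iff).2 hQ.irreducible, hr.ne', ?_⟩
  exact (map_pow normalizeHom Q r).symm.trans hg.normalize_eq_self

lemma eq_and_eq_of_pow_eq_pow {P Q : F[X]} (hP : P.Monic) (hPirr : Irreducible P) (hQ : Q.Monic)
    (hQirr : Irreducible Q) {r s : ℕ} (hr : r ≠ 0) (h : P ^ r = Q ^ s) : P = Q ∧ r = s := by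
  have hdvd : P ∣ Q := hPirr.prime.dvd_of_dvd_pow (h ▸ dvd_pow_self P hr)
  obtain rfl : P = Q :=
    eq_of_monic_of_associated hP hQ (hPirr.associated_of_dvd hQirr hdvd)
  exact ⟨rfl, pow_injective_of_not_isUnit hPirr.not_isUnit hPirr.ne_zero h⟩

section NormalizedFactors

variable [DecidableEq F]

lemma natDegree_eq_sum_count_normalizedFactors {f : F[X]} (hf : f.Monic) :
    f.natDegree = ∑ P ∈ (normalizedFactors f).toFinset,
      (normalizedFactors f).count P * P.natDegree := by
  conv_lhs => rw [← hf.normalize_eq_self, ← prod_normalizedFactors_eq hf.ne_zero,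
    natDegree_multiset_prod_of_monic _ fun P hP =>
      ((Polynomial.mem_normalizedFactors_iff hf.ne_zero).1 hP).2.1,
    sum_multiset_map_count]
  rfl

lemma pow_dvd_iff_le_count_normalizedFactors {f P : F[X]} (hf : f ≠ 0) (hP : P.Monic)
    (hirr : Irreducible P) (r : ℕ) : P ^ r ∣ f ↔ r ≤ (normalizedFactors f).count P := by
  rw [pow_dvd_iff_le_emultiplicity, emultiplicity_eq_count_normalizedFactors hirr hf,
    hP.normalize_eq_self, Nat.cast_le]

end NormalizedFactors

variable [Finite F]

open Classical in
/-- The finite set of monic divisors of a nonzero polynomial `f` over a finite field. -/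
noncomputable def monicDivisors (f : F[X]) : Finset F[X] :=
  {g ∈ (range (f.natDegree + 1)).biUnion (monicsOfDegree F) | g ∣ f}

lemma mem_monicDivisors {f g : F[X]} (hf : f ≠ 0) : g ∈ monicDivisors f ↔ g.Monic ∧ g ∣ f := by
  simp only [monicDivisors, mem_filter, mem_biUnion, mem_range, Order.lt_add_one_iff,
    mem_monicsOfDegree]
  exact ⟨fun ⟨⟨_, _, hg, _⟩, hdvd⟩ => ⟨hg, hdvd⟩,
    fun ⟨hg, hdvd⟩ => ⟨⟨_, natDegree_le_of_dvd hdvd hf, hg, rfl⟩, hdvd⟩⟩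

lemma sum_polyVonMangoldt_monicDivisors {f : F[X]} (hf : f.Monic) :
    ∑ g ∈ monicDivisors f, polyVonMangoldt g = f.natDegree := by
  classical
  set S : Finset ((_ : F[X]) × ℕ) := (normalizedFactors f).toFinset.sigma
    fun P => Icc 1 ((normalizedFactors f).count P)
  have hmem (x : (_ : F[X]) × ℕ) :
      x ∈ S ↔ x.1.Monic ∧ Irreducible x.1 ∧ x.2 ≠ 0 ∧ x.1 ^ x.2 ∣ f := by
    rw [mem_sigma, Multiset.mem_toFinset, Polynomial.mem_normalizedFactors_iff hf.ne_zero, mem_Icc,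
      Nat.one_le_iff_ne_zero]
    constructor
    · rintro ⟨⟨hirr, hP, -⟩, hr, hle⟩
      exact ⟨hP, hirr, hr, (pow_dvd_iff_le_count_normalizedFactors hf.ne_zero hP hirr _).2 hle⟩
    · rintro ⟨hP, hirr, hr, hdvd⟩
      exact ⟨⟨hirr, hP, (dvd_pow_self _ hr).trans hdvd⟩, hr,
        (pow_dvd_iff_le_count_normalizedFactors hf.ne_zero hP hirr _).1 hdvd⟩
  have hsum : f.natDegree = ∑ x ∈ S, x.1.natDegree := by
    rw [sum_sigma, natDegree_eq_sum_count_normalizedFactors hf]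
    simp
  rw [hsum]
  symm
  refine sum_of_injOn (fun x => x.1 ^ x.2) ?_ (fun x hx => ?_) (fun g hg hnot => ?_)
    (fun x hx => ?_)
  · rintro ⟨P, r⟩ hx ⟨Q, s⟩ hy h
    obtain ⟨hP, hPirr, hr, -⟩ := (hmem _).1 hx
    obtain ⟨hQ, hQirr, -⟩ := (hmem _).1 hy
    obtain ⟨rfl, rfl⟩ := eq_and_eq_of_pow_eq_pow hP hPirr hQ hQirr hr h
    rfl
  · obtain ⟨hP, -, -, hdvd⟩ := (hmem x).1 hx
    exact (mem_monicDivisors hf.ne_zero).2 ⟨hP.pow _, hdvd⟩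
  · obtain ⟨hg, hdvd⟩ := (mem_monicDivisors hf.ne_zero).1 hg
    refine polyVonMangoldt_eq_zero fun hpow => hnot ?_
    obtain ⟨P, r, hP, hirr, hr, rfl⟩ := exists_monic_irreducible_pow_eq hg hpow
    exact ⟨⟨P, r⟩, (hmem _).2 ⟨hP, hirr, hr, hdvd⟩, rfl⟩
  · obtain ⟨hP, hirr, hr, -⟩ := (hmem x).1 hx
    exact (polyVonMangoldt_pow hP hirr hr).symm

end VonMangoldt

section LogDerivative

variable {F R : Type*} [Field F] [CommRing R]

/-- The coefficient of `Tⁿ` in `T L'(T) / L(T)`, where `L` is the L-function with coefficients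
`lCoeff χ ψ`. -/
noncomputable def logDerivCoeff [Finite F] (χ : MulChar F R) (ψ : AddChar F R) (n : ℕ) : R :=
  ∑ g ∈ monicsOfDegree F n, (polyVonMangoldt g : R) * charWeight χ ψ g

lemma logDerivCoeff_zero [Finite F] (χ : MulChar F R) (ψ : AddChar F R) :
    logDerivCoeff χ ψ 0 = 0 := by
  rw [logDerivCoeff, monicsOfDegree_zero, sum_singleton,
    polyVonMangoldt_eq_zero not_isPrimePow_one, Nat.cast_zero, zero_mul]

open Classical in
lemma sum_monicDivisors [Finite F] (f : F[X]) (h : F[X] → R) :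
    ∑ g ∈ monicDivisors f, h g =
      ∑ i ∈ range (f.natDegree + 1), ∑ g ∈ monicsOfDegree F i with g ∣ f, h g := by
  rw [monicDivisors, filter_biUnion, sum_biUnion]
  intro i _ j _ hij
  refine disjoint_filter_filter (disjoint_left.2 fun g hi hj => hij ?_)
  rw [← (mem_monicsOfDegree.1 hi).2, (mem_monicsOfDegree.1 hj).2]

/-- The identity `T L' = (T L' / L) L` of formal power series, coefficientwise. -/
lemma natCast_mul_lCoeff [Finite F] (χ : MulChar F R) (ψ : AddChar F R) (n : ℕ) :
    n * lCoeff χ ψ n = ∑ i ∈ range (n + 1), logDerivCoeff χ ψ i * lCoeff χ ψ (n - i) := by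
  classical
  have hdegree : ∀ f ∈ monicsOfDegree F n, (n : R) = ∑ i ∈ range (n + 1),
      ∑ g ∈ monicsOfDegree F i with g ∣ f, (polyVonMangoldt g : R) := fun f hf => by
    obtain ⟨hmonic, rfl⟩ := mem_monicsOfDegree.1 hf
    rw [← sum_monicDivisors, ← Nat.cast_sum, sum_polyVonMangoldt_monicDivisors hmonic]
  calc n * lCoeff χ ψ n
      = ∑ f ∈ monicsOfDegree F n, ∑ i ∈ range (n + 1), ∑ g ∈ monicsOfDegree F i,
          if g ∣ f then polyVonMangoldt g * charWeight χ ψ f else 0 := by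
        rw [lCoeff, mul_sum]
        refine sum_congr rfl fun f hf => ?_
        rw [hdegree f hf, sum_mul]
        refine sum_congr rfl fun i _ => ?_
        rw [sum_mul, sum_filter]
    _ = ∑ i ∈ range (n + 1), ∑ g ∈ monicsOfDegree F i,
          polyVonMangoldt g * ∑ f ∈ monicsOfDegree F n with g ∣ f, charWeight χ ψ f := by
        rw [sum_comm]
        refine sum_congr rfl fun i _ => ?_
        rw [sum_comm]
        refine sum_congr rfl fun g _ => ?_
        rw [mul_sum, sum_filter]
    _ = ∑ i ∈ range (n + 1), logDerivCoeff χ ψ i * lCoeff χ ψ (n - i) := by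
        refine sum_congr rfl fun i hi => ?_
        rw [logDerivCoeff, sum_mul]
        refine sum_congr rfl fun g hg => ?_
        rw [sum_charWeight_filter_dvd χ ψ (Nat.lt_succ_iff.1 (mem_range.1 hi)) hg, mul_assoc]

variable [Fintype F]

lemma logDerivCoeff_one (χ : MulChar F R) (ψ : AddChar F R) :
    logDerivCoeff χ ψ 1 = gaussSum χ ψ := by
  have h := natCast_mul_lCoeff χ ψ 1
  rw [sum_range_succ, sum_range_one, logDerivCoeff_zero, lCoeff_one, lCoeff_zero] at h
  simpa using h.symm

lemma logDerivCoeff_add_two [IsDomain R] (χ : MulChar F R) {ψ : AddChar F R} (hψ : ψ ≠ 1) (n : ℕ) :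
    logDerivCoeff χ ψ (n + 2) = -gaussSum χ ψ * logDerivCoeff χ ψ (n + 1) := by
  have h := natCast_mul_lCoeff χ ψ (n + 2)
  have hlow : ∑ i ∈ range (n + 1), logDerivCoeff χ ψ i * lCoeff χ ψ (n + 2 - i) = 0 := by
    refine sum_eq_zero fun i hi => ?_
    obtain ⟨j, hj⟩ : ∃ j, n + 2 - i = j + 2 := ⟨n - i, by have := mem_range.1 hi; omega⟩
    rw [hj, lCoeff_add_two χ hψ, mul_zero]
  rw [lCoeff_add_two χ hψ, mul_zero, sum_range_succ, sum_range_succ, hlow, Nat.sub_self,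
    show n + 2 - (n + 1) = 1 by omega, lCoeff_one, lCoeff_zero] at h
  linear_combination -h

lemma logDerivCoeff_succ [IsDomain R] (χ : MulChar F R) {ψ : AddChar F R} (hψ : ψ ≠ 1) (n : ℕ) :
    logDerivCoeff χ ψ (n + 1) = (-1) ^ n * gaussSum χ ψ ^ (n + 1) := by
  induction n with
  | zero => simp [logDerivCoeff_one]
  | succ n ih => rw [logDerivCoeff_add_two χ hψ, ih]; ring

end LogDerivative

section Charpoly

open IntermediateField Module

variable {F K R : Type*} [Field F] [Field K] [Algebra F K] [CommRing R]

/-- The characteristic polynomial of multiplication by `α` on the extension `K` of `F`, encoded as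
the power of the minimal polynomial of `α` of degree `[K : F]`. -/
noncomputable def charpolyOver (F : Type*) [Field F] [Algebra F K] (α : K) : F[X] :=
  minpoly F α ^ finrank F⟮α⟯ K

variable [FiniteDimensional F K]

lemma natDegree_minpoly_mul_finrank (α : K) :
    (minpoly F α).natDegree * finrank F⟮α⟯ K = finrank F K := by
  rw [← adjoin.finrank (.of_finite F α), finrank_mul_finrank]

lemma charpolyOver_mem_monicsOfDegree [Finite F] (α : K) :
    charpolyOver F α ∈ monicsOfDegree F (finrank F K) := by
  refine mem_monicsOfDegree.2 ⟨(minpoly.monic (.of_finite F α)).pow _, ?_⟩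
  rw [charpolyOver, natDegree_pow, mul_comm, natDegree_minpoly_mul_finrank]

lemma charWeight_charpolyOver (χ : MulChar F R) (ψ : AddChar F R) (α : K) :
    charWeight χ ψ (charpolyOver F α) = χ (Algebra.norm F α) * ψ (Algebra.trace F K α) := by
  have hα : IsIntegral F α := .of_finite F α
  have hnorm := Algebra.PowerBasis.norm_gen_eq_coeff_zero_minpoly (adjoin.powerBasis hα)
  rw [adjoin.powerBasis_gen, adjoin.powerBasis_dim, minpoly_gen] at hnorm
  rw [charpolyOver, charWeight_pow χ ψ (minpoly.monic hα), trace_eq_finrank_mul_minpoly_nextCoeff,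
    Algebra.norm_eq_norm_adjoin, hnorm, charWeight, map_pow, ← nsmul_eq_mul,
    AddChar.map_nsmul_eq_pow, mul_pow]

lemma charpolyOver_eq_pow_iff {P : F[X]} (hP : P.Monic) (hirr : Irreducible P) {r : ℕ}
    (hr : P.natDegree * r = finrank F K) (α : K) :
    charpolyOver F α = P ^ r ↔ minpoly F α = P := by
  have hα : IsIntegral F α := .of_finite F α
  constructor
  · exact fun h => (eq_and_eq_of_pow_eq_pow (minpoly.monic hα) (minpoly.irreducible hα) hP hirr
      finrank_pos.ne' h).1
  · rintro rfl
    rw [charpolyOver, Nat.eq_of_mul_eq_mul_left hirr.natDegree_pos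
      ((natDegree_minpoly_mul_finrank α).trans hr.symm)]

variable [Finite F] [Fintype K]

open Classical in
lemma card_filter_minpoly_eq {P : F[X]} (hP : P.Monic) (hirr : Irreducible P)
    (hdvd : P.natDegree ∣ finrank F K) : #{α : K | minpoly F α = P} = P.natDegree := by
  have hroots := hirr.natDegree_dvd_iff_dvd_X_pow_card_pow_sub_X.1 hdvd
  have : Fintype F := Fintype.ofFinite F
  rw [← natCard_eq_pow_finrank, ← Fintype.card_eq_nat_card] at hroots
  have hsplits : (P.map (algebraMap F K)).Splits :=
    (FiniteField.isSplittingField_sub K F).splits.of_dvd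
      (map_ne_zero (FiniteField.X_pow_card_sub_X_ne_zero _ Fintype.one_lt_card))
      (map_dvd (algebraMap F K) hroots)
  rw [← card_rootSet_eq_natDegree (PerfectField.separable_of_irreducible hirr) hsplits,
    ← Set.toFinset_card]
  congr 1
  ext α
  rw [mem_filter_univ, Set.mem_toFinset, mem_rootSet_of_ne hirr.ne_zero]
  exact ⟨fun h => h ▸ minpoly.aeval F α,
    fun h => (minpoly.eq_of_irreducible_of_monic hirr h hP).symm⟩

open Classical in
lemma card_filter_charpolyOver_eq {g : F[X]} (hg : g ∈ monicsOfDegree F (finrank F K)) :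
    #{α : K | charpolyOver F α = g} = polyVonMangoldt g := by
  obtain ⟨hg, hdeg⟩ := mem_monicsOfDegree.1 hg
  by_cases hpow : IsPrimePow g
  · obtain ⟨P, r, hP, hirr, hr, rfl⟩ := exists_monic_irreducible_pow_eq hg hpow
    rw [natDegree_pow, mul_comm] at hdeg
    simp only [charpolyOver_eq_pow_iff hP hirr hdeg]
    rw [polyVonMangoldt_pow hP hirr hr, card_filter_minpoly_eq hP hirr ⟨r, hdeg.symm⟩]
  · rw [polyVonMangoldt_eq_zero hpow, card_eq_zero, filter_eq_empty_iff]
    rintro α - rfl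
    exact hpow ((minpoly.irreducible (.of_finite F α)).prime.isPrimePow.pow finrank_pos.ne')

end Charpoly

theorem sum_mulChar_norm_mul_addChar_trace {F K R : Type*} [Field F] [Fintype F] [Field K]
    [Fintype K] [Algebra F K] [CommRing R] [IsDomain R] (χ : MulChar F R) {ψ : AddChar F R}
    (hψ : ψ ≠ 1) :
    ∑ α : K, χ (Algebra.norm F α) * ψ (Algebra.trace F K α) =
      (-1) ^ (Module.finrank F K - 1) * gaussSum χ ψ ^ Module.finrank F K := by
  classical
  calc ∑ α : K, χ (Algebra.norm F α) * ψ (Algebra.trace F K α)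
      = ∑ α : K, charWeight χ ψ (charpolyOver F α) := by simp only [charWeight_charpolyOver]
    _ = ∑ g ∈ monicsOfDegree F (Module.finrank F K),
          #{α : K | charpolyOver F α = g} • charWeight χ ψ g :=
        by simp only [← sum_fiberwise_of_maps_to' (fun α _ => charpolyOver_mem_monicsOfDegree α),
          sum_const]
    _ = logDerivCoeff χ ψ (Module.finrank F K) :=
        sum_congr rfl fun g hg => by rw [card_filter_charpolyOver_eq hg, nsmul_eq_mul]
    _ = (-1) ^ (Module.finrank F K - 1) * gaussSum χ ψ ^ Module.finrank F K := by
        rw [← Nat.sub_add_cancel (Module.finrank_pos (R := F) (M := K)), logDerivCoeff_succ χ hψ,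
          Nat.add_sub_cancel]

end HasseDavenport

namespace TraceNormCode

open Finset

section Counting

lemma sum_eq_apply_zero_add_sum_units {G M : Type*} [GroupWithZero G] [Fintype G] [Fintype Gˣ]
    [AddCommMonoid M] (f : G → M) : ∑ x, f x = f 0 + ∑ u : Gˣ, f u := by
  classical
  rw [Fintype.sum_eq_add_sum_subtype_ne f 0]
  exact congrArg _ (unitsEquivNeZero.sum_comp fun x : {x : G // x ≠ 0} => f x).symm

variable {G V : Type*} [GroupWithZero G] [DecidableEq G] {S : Finset V} {τ : V → G}

lemma card_filter_eq_card_filter_eq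
    (h : ∀ u : Gˣ, ∃ e : Equiv.Perm V, ∀ d, (e d ∈ S ↔ d ∈ S) ∧ τ (e d) = u * τ d) {a b : G}
    (ha : a ≠ 0) (hb : b ≠ 0) : #{d ∈ S | τ d = a} = #{d ∈ S | τ d = b} := by
  obtain ⟨e, he⟩ := h (Units.mk0 (b / a) (div_ne_zero hb ha))
  refine card_equiv e fun d => ?_
  rw [mem_filter, mem_filter, (he d).1, (he d).2, Units.val_mk0]
  refine and_congr_right fun _ => ⟨fun hd => by rw [hd, div_mul_cancel₀ b ha], fun hd => ?_⟩
  exact mul_left_cancel₀ (div_ne_zero hb ha) (hd.trans (div_mul_cancel₀ b ha).symm)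

lemma card_units_mul_card_filter [Fintype G]
    (h : ∀ u : Gˣ, ∃ e : Equiv.Perm V, ∀ d, (e d ∈ S ↔ d ∈ S) ∧ τ (e d) = u * τ d)
    {P : G → Prop} [DecidablePred P] (hP : ¬P 0) :
    Fintype.card Gˣ * #{d ∈ S | P (τ d)} = #{c | P c} * #{d ∈ S | τ d ≠ 0} := by
  have hfiber (Q : G → Prop) [DecidablePred Q] (hQ : ¬Q 0) :
      #{d ∈ S | Q (τ d)} = #{c | Q c} * #{d ∈ S | τ d = 1} := by
    rw [card_eq_sum_card_fiberwise (f := τ) (t := {c | Q c}) fun d hd => by simp_all,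
      ← smul_eq_mul, ← sum_const]
    refine sum_congr rfl fun c hc => ?_
    rw [filter_filter, ← card_filter_eq_card_filter_eq h (a := c) _ one_ne_zero]
    · congr 1
      refine filter_congr fun d _ => and_iff_right_of_imp ?_
      rintro rfl
      simpa using hc
    · rintro rfl
      exact hQ (by simpa using hc)
  have hunits : #{c : G | c ≠ 0} = Fintype.card Gˣ := by
    rw [← Fintype.card_subtype, Fintype.card_congr unitsEquivNeZero]
  rw [hfiber P hP, hfiber (· ≠ 0) (not_not_intro rfl), hunits]
  ring

lemma card_mul_card_filter_ne_zero {E V R : Type*} [Field E] [Fintype E] [DecidableEq E]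
    [AddCommGroup V] [Module E V] [CommRing R] [IsDomain R] {ψ : AddChar E R} (hψ : ψ ≠ 1)
    {S : Finset V} (hS : ∀ (u : Eˣ) (d : V), u • d ∈ S ↔ d ∈ S) (ℓ : V →ₗ[E] E) :
    (Fintype.card E : R) * #{d ∈ S | ℓ d ≠ 0} =
      (Fintype.card E - 1) * (#S - ∑ d ∈ S, ψ (ℓ d)) := by
  have hinv (u : Eˣ) : ∑ d ∈ S, ψ (u * ℓ d) = ∑ d ∈ S, ψ (ℓ d) := by
    refine sum_equiv (MulAction.toPerm u) (fun d => (hS u d).symm) fun d _ => ?_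
    rw [MulAction.toPerm_apply, Units.smul_def, map_smul, smul_eq_mul]
  have horth : (Fintype.card E : R) * #{d ∈ S | ℓ d = 0} = ∑ x : E, ∑ d ∈ S, ψ (x * ℓ d) := by
    rw [sum_comm]
    simp only [AddChar.sum_mulShift _ (AddChar.IsPrimitive.of_ne_one hψ)]
    rw [← Nat.cast_sum, ← sum_filter, sum_const, smul_eq_mul, Nat.cast_mul, mul_comm]
  have hunits : (Fintype.card Eˣ : R) = Fintype.card E - 1 := by
    classical rw [Fintype.card_units, Nat.cast_pred Fintype.card_pos]
  have hsplit : (#S : R) = #{d ∈ S | ℓ d = 0} + #{d ∈ S | ℓ d ≠ 0} := by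
    rw [← card_filter_add_card_filter_not (fun d => ℓ d = 0), Nat.cast_add]
  rw [sum_eq_apply_zero_add_sum_units] at horth
  simp only [hinv, zero_mul, AddChar.map_zero_eq_one, sum_const, nsmul_eq_mul, mul_one,
    card_univ, hunits] at horth
  linear_combination -horth - (Fintype.card E : R) * hsplit

end Counting

section TraceChar

variable {E F K R : Type*} [Field E] [Field F] [Field K] [Algebra E F] [CommRing R]

/-- The additive character `ψ ∘ Tr_{F/E}` of an extension `F` of `E`. -/
noncomputable def traceChar (ψ : AddChar E R) (F : Type*) [Field F] [Algebra E F] : AddChar F R :=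
  ψ.compAddMonoidHom (Algebra.trace E F).toAddMonoidHom

lemma traceChar_apply (ψ : AddChar E R) (x : F) :
    traceChar ψ F x = ψ (Algebra.trace E F x) := rfl

lemma traceChar_traceChar [Algebra F K] [Algebra E K] [IsScalarTower E F K]
    [FiniteDimensional E F] [FiniteDimensional F K] (ψ : AddChar E R) :
    traceChar (traceChar ψ F) K = traceChar ψ K := by
  ext x
  simp only [traceChar_apply, Algebra.trace_trace]

lemma traceChar_ne_one [Finite F] {ψ : AddChar E R} (hψ : ψ ≠ 1) :
    traceChar ψ F ≠ 1 := by
  obtain ⟨c, hc⟩ := AddChar.ne_one_iff.1 hψ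
  have : Finite E := .of_injective _ (algebraMap E F).injective
  obtain ⟨x, rfl⟩ := Algebra.trace_surjective E F c
  exact AddChar.ne_one_iff.2 ⟨x, hc⟩

lemma sum_traceChar_mul_left [Fintype F] [IsDomain R] {ψ : AddChar E R} (hψ : ψ ≠ 1) {b : F}
    (hb : b ≠ 0) : ∑ d : F, traceChar ψ F (b * d) = 0 :=
  (Equiv.sum_comp (Equiv.mulLeft₀ b hb) (traceChar ψ F)).trans
    (AddChar.sum_eq_zero_of_ne_one (traceChar_ne_one hψ))

end TraceChar

section Orthogonality

lemma sum_range_orderOf_inv_pow_apply {M R : Type*} [CommMonoid M] [CommRing R] [IsDomain R]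
    (φ : MulChar M R) (v : Mˣ) [Decidable (φ v = 1)] :
    ∑ j ∈ range (orderOf φ), (φ ^ j)⁻¹ v = if φ v = 1 then (orderOf φ : R) else 0 := by
  have hinv : φ⁻¹ v = 1 ↔ φ v = 1 := eq_one_iff_eq_one_of_mul_eq_one <| by
    rw [← MulChar.mul_apply, MulChar.inv_mul, MulChar.one_apply_coe]
  simp only [← inv_pow, MulChar.pow_apply_coe]
  split_ifs with h
  · simp [hinv.2 h]
  · have hgeom := mul_geom_sum (φ⁻¹ v) (orderOf φ)
    rw [← MulChar.pow_apply_coe, inv_pow, pow_orderOf_eq_one, inv_one, MulChar.one_apply_coe,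
      sub_self] at hgeom
    exact (mul_eq_zero.1 hgeom).resolve_left (sub_ne_zero.2 (mt hinv.1 h))

variable {E F R : Type*} [Field E] [Field F] [Fintype E] [Algebra E F] [CommRing R]

lemma mem_range_unitsMap_algebraMap_iff [Finite F] (v : Fˣ) :
    v ∈ (Units.map (algebraMap E F : E →* F)).range ↔ v ^ (Fintype.card E - 1) = 1 := by
  classical
  have : Fintype F := Fintype.ofFinite F
  have hinj : Function.Injective (Units.map (algebraMap E F : E →* F)) :=
    Units.map_injective (algebraMap E F).injective
  have hsub : univ.image (Units.map (algebraMap E F : E →* F)) ⊆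
      ({v | v ^ (Fintype.card E - 1) = 1} : Finset Fˣ) := by
    intro v hv
    obtain ⟨y, -, rfl⟩ := mem_image.1 hv
    rw [mem_filter_univ, ← map_pow, ← Fintype.card_units, pow_card_eq_one, map_one]
  have heq := eq_of_subset_of_card_le hsub <| by
    rw [card_image_of_injective _ hinj, card_univ, Fintype.card_units]
    exact IsCyclic.card_pow_eq_one_le (Nat.sub_pos_of_lt Fintype.one_lt_card)
  simpa [MonoidHom.mem_range] using Finset.ext_iff.1 heq v

variable [Fintype F] {φ : MulChar F R}

lemma apply_eq_one_iff_mem_range (hφ : orderOf φ * (Fintype.card E - 1) = Fintype.card F - 1)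
    (v : Fˣ) : φ v = 1 ↔ v ∈ (Units.map (algebraMap E F : E →* F)).range := by
  classical
  obtain ⟨g, hg⟩ := IsCyclic.exists_generator (α := Fˣ)
  have hgo : orderOf g = Fintype.card F - 1 := by
    rw [orderOf_eq_card_of_forall_mem_zpowers hg, Nat.card_eq_fintype_card, Fintype.card_units]
  obtain ⟨i, rfl⟩ : ∃ i : ℕ, g ^ i = v := mem_powers_iff_mem_zpowers.2 (hg v)
  rw [mem_range_unitsMap_algebraMap_iff, ← pow_mul, ← orderOf_dvd_iff_pow_eq_one, hgo, ← hφ,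
    Nat.mul_dvd_mul_iff_right (Nat.sub_pos_of_lt Fintype.one_lt_card),
    orderOf_dvd_iff_pow_eq_one, MulChar.eq_iff hg, MulChar.pow_apply_coe, MulChar.one_apply_coe,
    Units.val_pow_eq_pow_val, map_pow]

lemma sum_range_orderOf_sum_inv_pow_mul [DecidableEq E] [IsDomain R]
    (hφ : orderOf φ * (Fintype.card E - 1) = Fintype.card F - 1) (g : F → R) :
    ∑ j ∈ range (orderOf φ), ∑ v, (φ ^ j)⁻¹ v * g v =
      orderOf φ * ∑ y : Eˣ, g (algebraMap E F y) := by
  classical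
  simp only [sum_eq_apply_zero_add_sum_units (G := F), MulChar.map_zero, zero_mul, zero_add]
  rw [sum_comm]
  simp only [← sum_mul, sum_range_orderOf_inv_pow_apply, ite_mul, zero_mul]
  rw [← sum_filter, ← mul_sum]
  refine congrArg _ (sum_bij (fun y _ => Units.map (algebraMap E F : E →* F) y) (fun y _ => ?_)
    (fun _ _ _ _ h => Units.map_injective (algebraMap E F).injective h) (fun v hv => ?_)
    fun _ _ => rfl).symm
  · exact (mem_filter_univ _).2 ((apply_eq_one_iff_mem_range hφ _).2 ⟨y, rfl⟩)
  · obtain ⟨y, hy⟩ := (apply_eq_one_iff_mem_range (E := E) hφ v).1 (mem_filter.1 hv).2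
    exact ⟨y, mem_univ _, hy⟩

end Orthogonality

section TwistedSums

variable {F K R : Type*} [Field F] [CommRing R]

lemma sum_mulChar_norm_mul_comp_mul_left [Field K] [Fintype K] [Algebra F K] (θ : MulChar F R)
    (Ψ : K → R) {b : K} (hb : b ≠ 0) :
    ∑ d : K, θ (Algebra.norm F d) * Ψ (b * d) =
      θ⁻¹ (Algebra.norm F b) * ∑ d : K, θ (Algebra.norm F d) * Ψ d := by
  have hθ : θ⁻¹ (Algebra.norm F b) * θ (Algebra.norm F b) = 1 := by
    rw [← MulChar.mul_apply, MulChar.inv_mul,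
      MulChar.one_apply (Algebra.norm_ne_zero_iff.2 hb).isUnit]
  rw [mul_sum]
  refine sum_equiv (Equiv.mulLeft₀ b hb) (by simp) fun d _ => ?_
  rw [Equiv.mulLeft₀_apply, map_mul, map_mul]
  linear_combination -(θ (Algebra.norm F d) * Ψ (b * d)) * hθ

variable [Fintype F] [IsDomain R]

lemma gaussSum_one_mulShift [DecidableEq F] {χ : AddChar F R} (hχ : χ ≠ 1) (a : F) :
    gaussSum (1 : MulChar F R) (χ.mulShift a) =
      (if a = 0 then (Fintype.card F : R) else 0) - 1 := by
  split_ifs with ha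
  · rw [ha, AddChar.mulShift_zero, gaussSum_one_one, Nat.card_eq_fintype_card,
      Fintype.card_units, Nat.cast_pred Fintype.card_pos]
  · rw [gaussSum_one_left (AddChar.IsPrimitive.of_ne_one hχ ha), zero_sub]

lemma gaussSum_mulShift_of_ne_one {θ : MulChar F R} (hθ : θ ≠ 1) (χ : AddChar F R) (a : F) :
    gaussSum θ (χ.mulShift a) = θ⁻¹ a * gaussSum θ χ := by
  rcases eq_or_ne a 0 with rfl | ha
  · rw [AddChar.mulShift_zero, gaussSum_one_right hθ, MulChar.map_zero, zero_mul]
  · exact gaussSum_mulShift_eq θ χ (Units.mk0 a ha)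

lemma gaussSum_inv_mul_gaussSum {θ : MulChar F R} (hθ : θ ≠ 1) {χ : AddChar F R} (hχ : χ ≠ 1) :
    gaussSum θ⁻¹ χ * gaussSum θ χ = θ (-1) * Fintype.card F := by
  have hneg : θ⁻¹ (-1) = θ (-1) := by rw [MulChar.inv_apply', inv_neg_one]
  rw [← mul_gaussSum_inv_eq_gaussSum θ⁻¹ χ, hneg,
    ← gaussSum_mul_gaussSum_eq_card hθ (AddChar.IsPrimitive.of_ne_one hχ)]
  ring

variable [Field K] [Fintype K] [Algebra F K]

lemma sum_gaussSum_one_mulShift_norm_mul_traceChar {χ : AddChar F R} (hχ : χ ≠ 1) {b : K}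
    (hb : b ≠ 0) :
    ∑ d : K, gaussSum (1 : MulChar F R) (χ.mulShift (Algebra.norm F d)) * traceChar χ K (b * d) =
      Fintype.card F := by
  classical
  simp only [gaussSum_one_mulShift hχ, Algebra.norm_eq_zero_iff, sub_mul, one_mul, ite_mul,
    zero_mul, sum_sub_distrib, sum_traceChar_mul_left hχ hb, sum_ite_eq', mem_univ, if_true,
    mul_zero, AddChar.map_zero_eq_one, mul_one, sub_zero]

lemma sum_gaussSum_inv_mulShift_norm_mul_traceChar {θ : MulChar F R} (hθ : θ ≠ 1)
    {χ : AddChar F R} (hχ : χ ≠ 1) {b : K} (hb : b ≠ 0) :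
    ∑ d : K, gaussSum θ⁻¹ (χ.mulShift (Algebra.norm F d)) * traceChar χ K (b * d) =
      Fintype.card F * (-1) ^ (Module.finrank F K - 1) *
        (θ (-1) * gaussSum θ χ ^ (Module.finrank F K - 1) * θ⁻¹ (Algebra.norm F b)) := by
  have hlift := HasseDavenport.sum_mulChar_norm_mul_addChar_trace (K := K) θ hχ
  obtain ⟨n, hn⟩ := Nat.exists_eq_add_one.2 (Module.finrank_pos (R := F) (M := K))
  calc ∑ d : K, gaussSum θ⁻¹ (χ.mulShift (Algebra.norm F d)) * traceChar χ K (b * d)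
      = gaussSum θ⁻¹ χ * ∑ d : K, θ (Algebra.norm F d) * traceChar χ K (b * d) := by
        rw [mul_sum]
        refine sum_congr rfl fun d _ => ?_
        rw [gaussSum_mulShift_of_ne_one (inv_ne_one.2 hθ), inv_inv]
        ring
    _ = gaussSum θ⁻¹ χ * gaussSum θ χ *
          ((-1) ^ n * gaussSum θ χ ^ n * θ⁻¹ (Algebra.norm F b)) := by
        rw [sum_mulChar_norm_mul_comp_mul_left θ _ hb]
        simp only [traceChar_apply]
        rw [hlift, hn, Nat.add_sub_cancel]
        ring
    _ = _ := by
        rw [gaussSum_inv_mul_gaussSum hθ hχ, hn, Nat.add_sub_cancel]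
        ring

end TwistedSums

section TraceNorm

variable {E F K R : Type*} [Field E] [Field F] [Field K] [Algebra E F] [Algebra F K] [CommRing R]

/-- The function `d ↦ Tr_{F/E} (N_{K/F} d)` on the top of a tower `K / F / E`; the defining sets of
the codes are its level sets. -/
noncomputable def traceNorm (E F : Type*) {K : Type*} [Field E] [Field F] [Field K] [Algebra E F]
    [Algebra F K] (d : K) : E :=
  Algebra.trace E F (Algebra.norm F d)

lemma mul_traceNorm (y : E) (d : K) :
    y * traceNorm E F d = Algebra.trace E F (algebraMap E F y * Algebra.norm F d) := by
  rw [traceNorm, ← smul_eq_mul, ← map_smul, Algebra.smul_def]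

lemma traceNorm_smul [Algebra E K] [IsScalarTower E F K] (y : E) (d : K) :
    traceNorm E F (y • d) = y ^ Module.finrank F K * traceNorm E F d := by
  rw [mul_traceNorm, traceNorm, ← algebraMap_smul F y d, Algebra.smul_def, map_mul,
    Algebra.norm_algebraMap, map_pow]

variable [Fintype E] [DecidableEq E] [IsDomain R] {ψ : AddChar E R}

section Norm

variable [Fintype F]

lemma card_units_mul_card_filter_norm [Fintype K] [DecidableEq F] [DecidableEq K] {P : F → Prop}
    [DecidablePred P] (hP : ¬P 0) :
    Fintype.card Fˣ * #{d : K | P (Algebra.norm F d)} = #{c | P c} * Fintype.card Kˣ := by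
  have hunits : #{d : K | Algebra.norm F d ≠ 0} = Fintype.card Kˣ := by
    simp only [ne_eq, Algebra.norm_eq_zero_iff]
    rw [← Fintype.card_subtype, Fintype.card_congr unitsEquivNeZero]
  rw [← hunits]
  refine card_units_mul_card_filter (fun u => ?_) hP
  obtain ⟨c, rfl⟩ := FiniteField.unitsMap_norm_surjective F K u
  exact ⟨Equiv.mulLeft₀ c c.ne_zero, fun d => ⟨by simp, map_mul _ _ _⟩⟩

lemma card_mul_card_filter_trace_ne_zero (hψ : ψ ≠ 1) :
    (Fintype.card E : R) * #{c : F | Algebra.trace E F c ≠ 0} =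
      (Fintype.card E - 1) * Fintype.card F := by
  rw [card_mul_card_filter_ne_zero hψ (by simp), card_univ]
  have hsum := AddChar.sum_eq_zero_of_ne_one (traceChar_ne_one (F := F) hψ)
  simp only [traceChar_apply] at hsum
  rw [hsum, sub_zero]

lemma card_mul_card_filter_traceNorm_ne_zero [Fintype K] (hψ : ψ ≠ 1) :
    (Fintype.card E : R) * (Fintype.card F - 1) * #{d : K | traceNorm E F d ≠ 0} =
      (Fintype.card E - 1) * Fintype.card F * (Fintype.card K - 1) := by
  classical
  have hnorm := card_units_mul_card_filter_norm (K := K) (P := (Algebra.trace E F · ≠ 0)) (by simp)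
  have hnorm' : (Fintype.card Fˣ : R) * #{d : K | traceNorm E F d ≠ 0} =
      #{c : F | Algebra.trace E F c ≠ 0} * Fintype.card Kˣ := mod_cast congrArg Nat.cast hnorm
  rw [Fintype.card_units, Fintype.card_units, Nat.cast_pred Fintype.card_pos,
    Nat.cast_pred Fintype.card_pos] at hnorm'
  rw [mul_assoc, hnorm', ← mul_assoc, card_mul_card_filter_trace_ne_zero hψ]

end Norm

variable [Algebra E K]

lemma card_units_mul_card_filter_traceNorm_eq [IsScalarTower E F K]
    (hcop : (Fintype.card Eˣ).Coprime (Module.finrank F K)) {S : Finset K}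
    (hS : ∀ (u : Eˣ) (d : K), u • d ∈ S ↔ d ∈ S) {a : E} (ha : a ≠ 0) :
    Fintype.card Eˣ * #{d ∈ S | traceNorm E F d = a} = #{d ∈ S | traceNorm E F d ≠ 0} := by
  rw [← Nat.card_eq_fintype_card] at hcop
  have hperm (u : Eˣ) : ∃ e : Equiv.Perm K, ∀ d,
      (e d ∈ S ↔ d ∈ S) ∧ traceNorm E F (e d) = u * traceNorm E F d := by
    obtain ⟨y, rfl⟩ := (powCoprime hcop).surjective u
    refine ⟨MulAction.toPerm y, fun d => ⟨hS y d, ?_⟩⟩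
    rw [MulAction.toPerm_apply, Units.smul_def, traceNorm_smul, powCoprime_apply,
      Units.val_pow_eq_pow_val]
  have := card_units_mul_card_filter hperm (P := (· = a)) ha.symm
  rwa [filter_eq' univ a, if_pos (mem_univ a), card_singleton, one_mul] at this

variable [Fintype K]

lemma card_mul_card_filter_traceNorm_eq_and_trace_ne_zero [IsScalarTower E F K] [CharZero R]
    (hcop : (Fintype.card Eˣ).Coprime (Module.finrank F K)) (hψ : ψ ≠ 1) {a : E} (ha : a ≠ 0)
    {b : K} (hb : b ≠ 0) :
    (Fintype.card E : R) * #{d : K | traceNorm E F d = a ∧ Algebra.trace E K (b * d) ≠ 0} =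
      #{d : K | traceNorm E F d ≠ 0} +
        ∑ d : K with traceNorm E F d = 0, traceChar ψ K (b * d) := by
  have hlevel : (Fintype.card Eˣ : R) *
      #{d : K | traceNorm E F d = a ∧ Algebra.trace E K (b * d) ≠ 0} =
      #{d : K | traceNorm E F d ≠ 0 ∧ Algebra.trace E K (b * d) ≠ 0} := by
    have := card_units_mul_card_filter_traceNorm_eq (F := F) hcop
      (S := {d : K | Algebra.trace E K (b * d) ≠ 0}) (by simp [Units.smul_def]) ha
    simp only [filter_filter, and_comm (a := Algebra.trace E K _ ≠ 0)] at this
    exact_mod_cast this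
  have hscale : (Fintype.card E : R) *
      #{d : K | traceNorm E F d ≠ 0 ∧ Algebra.trace E K (b * d) ≠ 0} =
      (Fintype.card E - 1) * (#{d : K | traceNorm E F d ≠ 0} -
        ∑ d : K with ¬traceNorm E F d = 0, traceChar ψ K (b * d)) := by
    rw [← filter_filter]
    exact card_mul_card_filter_ne_zero hψ (by simp [Units.smul_def, traceNorm_smul])
      (Algebra.traceForm E K b)
  have hsum := sum_filter_add_sum_filter_not univ (fun d : K => traceNorm E F d = 0)
    fun d => traceChar ψ K (b * d)
  rw [sum_traceChar_mul_left hψ hb] at hsum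
  rw [Fintype.card_units, Nat.cast_pred Fintype.card_pos] at hlevel
  have hq : (Fintype.card E : R) - 1 ≠ 0 :=
    sub_ne_zero.2 (mod_cast (Fintype.one_lt_card (α := E)).ne')
  refine mul_left_cancel₀ hq ?_
  linear_combination Fintype.card E * hlevel + hscale - (Fintype.card E - 1) * hsum

lemma card_mul_sum_filter_traceNorm_eq_zero (hψ : ψ ≠ 1) {b : K} (hb : b ≠ 0) :
    Fintype.card E * ∑ d : K with traceNorm E F d = 0, traceChar ψ K (b * d) =
      ∑ y : Eˣ, ∑ d : K,
        traceChar ψ F (algebraMap E F y * Algebra.norm F d) * traceChar ψ K (b * d) := by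
  have horth (t : E) : (if t = 0 then (Fintype.card E : R) else 0) = ∑ y : E, ψ (y * t) := by
    rw [AddChar.sum_mulShift _ (AddChar.IsPrimitive.of_ne_one hψ), Nat.cast_ite, Nat.cast_zero]
  rw [sum_filter, mul_sum]
  calc ∑ d : K, Fintype.card E * (if traceNorm E F d = 0 then traceChar ψ K (b * d) else 0)
      = ∑ y : E, ∑ d : K, ψ (y * traceNorm E F d) * traceChar ψ K (b * d) := by
        rw [sum_comm]
        refine sum_congr rfl fun d _ => ?_
        rw [← sum_mul, ← horth, mul_ite, mul_zero, ite_mul, zero_mul]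
    _ = ∑ y : Eˣ, ∑ d : K, ψ (y * traceNorm E F d) * traceChar ψ K (b * d) := by
        rw [sum_eq_apply_zero_add_sum_units]
        simp only [zero_mul, AddChar.map_zero_eq_one, one_mul, sum_traceChar_mul_left hψ hb,
          zero_add]
    _ = _ := by simp only [mul_traceNorm, traceChar_apply]

variable [Fintype F]

/-- The sum `∑_{j = 1}^{ord φ - 1} φʲ(-1) G(φʲ, χ)ⁿ φ⁻ʲ(c)` of powers of Gauss sums that occurs in
the weight of a codeword. -/
noncomputable def gaussPowSum (φ : MulChar F R) (χ : AddChar F R) (n : ℕ) (c : F) : R :=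
  ∑ j ∈ Icc 1 (orderOf φ - 1), (φ ^ j) (-1) * gaussSum (φ ^ j) χ ^ n * (φ ^ j)⁻¹ c

lemma orderOf_mul_card_mul_sum_filter_traceNorm_eq_zero [IsScalarTower E F K] {φ : MulChar F R}
    (hφ : orderOf φ * (Fintype.card E - 1) = Fintype.card F - 1) (hψ : ψ ≠ 1) {b : K}
    (hb : b ≠ 0) :
    orderOf φ * (Fintype.card E * ∑ d : K with traceNorm E F d = 0, traceChar ψ K (b * d)) =
      Fintype.card F * (1 + (-1) ^ (Module.finrank F K - 1) *
        gaussPowSum φ (traceChar ψ F) (Module.finrank F K - 1) (Algebra.norm F b)) := by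
  set χ := traceChar ψ F with hχψ
  have hχ : χ ≠ 1 := traceChar_ne_one hψ
  have hord : orderOf φ ≠ 0 := by
    intro h
    rw [h, zero_mul] at hφ
    exact (Nat.sub_pos_of_lt Fintype.one_lt_card).ne hφ
  have hterm (θ : MulChar F R) :
      ∑ v, θ⁻¹ v * ∑ d : K, χ (v * Algebra.norm F d) * traceChar ψ K (b * d) =
        ∑ d : K, gaussSum θ⁻¹ (χ.mulShift (Algebra.norm F d)) * traceChar χ K (b * d) := by
    simp only [gaussSum, mul_sum, sum_mul, hχψ, traceChar_traceChar]
    rw [sum_comm]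
    simp only [AddChar.mulShift_apply, mul_assoc, mul_comm (Algebra.norm F _)]
  have hne {j : ℕ} (hj : j ∈ Icc 1 (orderOf φ - 1)) : φ ^ j ≠ 1 := by
    rw [mem_Icc] at hj
    exact pow_ne_one_of_lt_orderOf (by omega) (by omega)
  rw [card_mul_sum_filter_traceNorm_eq_zero hψ hb, ← sum_range_orderOf_sum_inv_pow_mul hφ
    fun v => ∑ d : K, χ (v * Algebra.norm F d) * traceChar ψ K (b * d)]
  simp only [hterm]
  rw [range_eq_Ico, sum_eq_sum_Ico_succ_bot (Nat.pos_of_ne_zero hord), pow_zero, inv_one,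
    sum_gaussSum_one_mulShift_norm_mul_traceChar hχ hb, zero_add,
    ← Nat.sub_one_add_one hord, Ico_add_one_right_eq_Icc,
    sum_congr rfl fun j hj => sum_gaussSum_inv_mulShift_norm_mul_traceChar (hne hj) hχ hb,
    ← mul_sum, gaussPowSum]
  ring

theorem sq_card_mul_card_filter_traceNorm_eq_and_trace_ne_zero [IsScalarTower E F K] [CharZero R]
    (hcop : (Fintype.card Eˣ).Coprime (Module.finrank F K)) (hψ : ψ ≠ 1) {φ : MulChar F R}
    (hφ : orderOf φ * (Fintype.card E - 1) = Fintype.card F - 1) {a : E} (ha : a ≠ 0) {b : K}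
    (hb : b ≠ 0) :
    (Fintype.card E : R) ^ 2 * (Fintype.card F - 1) *
        #{d : K | traceNorm E F d = a ∧ Algebra.trace E K (b * d) ≠ 0} =
      (Fintype.card E - 1) * Fintype.card F * (Fintype.card K + (-1) ^ (Module.finrank F K - 1) *
        gaussPowSum φ (traceChar ψ F) (Module.finrank F K - 1) (Algebra.norm F b)) := by
  have hweight := card_mul_card_filter_traceNorm_eq_and_trace_ne_zero (F := F) hcop hψ ha hb
  have hcount := card_mul_card_filter_traceNorm_ne_zero (F := F) (K := K) hψ
  have hsum := orderOf_mul_card_mul_sum_filter_traceNorm_eq_zero hφ hψ hb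
  have hφ' : (orderOf φ : R) * (Fintype.card E - 1) = Fintype.card F - 1 := by
    rw [← Nat.cast_pred Fintype.card_pos, ← Nat.cast_pred Fintype.card_pos]
    exact_mod_cast congrArg Nat.cast hφ
  set T := ∑ d : K with traceNorm E F d = 0, traceChar ψ K (b * d)
  linear_combination Fintype.card E * (Fintype.card F - 1) * hweight + hcount +
    (Fintype.card E - 1) * hsum - Fintype.card E * T * hφ'

end TraceNorm

section CanonicalCharacter

variable {E F : Type*} [Field E] [Field F] [Finite F] [Algebra E F] {p : ℕ} [Fact p.Prime]
  [Algebra (ZMod p) F]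

lemma exists_eq_traceChar_of_apply_eq_exp {χ : AddChar F ℂ}
    (hχ : ∀ x, χ x =
      Complex.exp (2 * Real.pi * Complex.I * ((Algebra.trace (ZMod p) F x).val : ℂ) / p)) :
    ∃ ψ : AddChar E ℂ, ψ ≠ 1 ∧ χ = traceChar ψ F := by
  have : Finite E := .of_injective _ (algebraMap E F).injective
  have : CharP F p := charP_of_injective_algebraMap (algebraMap (ZMod p) F).injective p
  have : CharP E p := (algebraMap E F).charP (algebraMap E F).injective p
  let : Algebra (ZMod p) E := ZMod.algebra E p
  have : IsScalarTower (ZMod p) E F := .of_algebraMap_eq' (Subsingleton.elim _ _)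
  have hstd : ZMod.stdAddChar (N := p) ≠ 1 :=
    AddChar.ne_one_iff.2 ⟨1, fun h => one_ne_zero <|
      ZMod.injective_stdAddChar (h.trans (AddChar.map_zero_eq_one _).symm)⟩
  refine ⟨traceChar ZMod.stdAddChar E, traceChar_ne_one (E := ZMod p) hstd, ?_⟩
  ext x
  rw [traceChar_traceChar, traceChar_apply, ZMod.stdAddChar_apply, ZMod.toCircle_apply, hχ]

end CanonicalCharacter

lemma eq_add_of_sq_mul_sub_one_mul_eq {R : Type*} [Field R] {q w s S : R} {f k : ℕ} (hq : q ≠ 0)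
    (hqf : q ^ f - 1 ≠ 0) (hf : f ≠ 0) (hk : k ≠ 0) (hS : f = 1 → S = 0)
    (h : q ^ 2 * (q ^ f - 1) * w = (q - 1) * q ^ f * (q ^ k + s * S)) :
    w = (q - 1) * q ^ (f + k - 2) / (q ^ f - 1) +
      s * (q - 1) * q ^ (f - 2) / (q ^ f - 1) * S := by
  have hexp : q ^ 2 * q ^ (f + k - 2) = q ^ f * q ^ k := by
    rw [← pow_add, ← pow_add, Nat.add_sub_cancel' (by omega)]
  -- For `f = 1` the exponent `f - 2` is truncated, but it is then multiplied by `S = 0`.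
  have hexpS : q ^ 2 * q ^ (f - 2) * S = q ^ f * S := by
    rcases eq_or_ne f 1 with hf1 | hf1
    · rw [hS hf1, mul_zero, mul_zero]
    · rw [← pow_add, Nat.add_sub_cancel' (by omega)]
  field_simp
  refine mul_left_cancel₀ (pow_ne_zero 2 hq) ?_
  linear_combination h - (q - 1) * hexp - s * (q - 1) * hexpS

end TraceNormCode

open Finset TraceNormCode in
theorem stmt14_general {q f k : ℕ} (hgcd : Nat.gcd (k / f) (q - 1) = 1)
    {Fq Ff Fk R : Type*} [Field Fq] [Field Ff] [Field Fk] [Field R] [CharZero R]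
    [Fintype Fq] [Fintype Ff] [Fintype Fk]
    [Algebra Fq Ff] [Algebra Ff Fk] [Algebra Fq Fk] [IsScalarTower Fq Ff Fk]
    (hcq : Fintype.card Fq = q) (hcf : Fintype.card Ff = q ^ f) (hck : Fintype.card Fk = q ^ k)
    {ψ : AddChar Fq R} (hψ : ψ ≠ 1) {φ : MulChar Ff R} (hφ : orderOf φ = (q ^ f - 1) / (q - 1))
    {a : Fq} (ha : a ≠ 0) {b : Fk} (hb : b ≠ 0) :
    (Nat.card {d : Fk // Algebra.trace Fq Ff (Algebra.norm Ff d) + a = 0 ∧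
        Algebra.trace Fq Fk (b * d) ≠ 0} : R)
      = ((q : R) - 1) * (q : R) ^ (f + k - 2) / ((q : R) ^ f - 1) +
        (-1 : R) ^ (k / f - 1) * ((q : R) - 1) * (q : R) ^ (f - 2) / ((q : R) ^ f - 1) *
          ∑ j ∈ Icc 1 ((q ^ f - 1) / (q - 1) - 1),
            (φ ^ j) (-1) * gaussSum (φ ^ j) (traceChar ψ Ff) ^ (k / f - 1) *
              (φ ^ j)⁻¹ (Algebra.norm Ff b) := by
  classical
  have hq : 1 < q := hcq ▸ Fintype.one_lt_card
  have hqf : 1 < q ^ f := hcf ▸ Fintype.one_lt_card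
  have hqk : 1 < q ^ k := hck ▸ Fintype.one_lt_card
  have hf : f ≠ 0 := by
    rintro rfl
    exact hqf.ne' (pow_zero q)
  have hk : k ≠ 0 := by
    rintro rfl
    exact hqk.ne' (pow_zero q)
  have hfinrank : Module.finrank Ff Fk = k / f := by
    have hcard := Module.card_eq_pow_finrank (K := Ff) (V := Fk)
    rw [hck, hcf, ← pow_mul] at hcard
    exact (Nat.div_eq_of_eq_mul_right (Nat.pos_of_ne_zero hf)
      (Nat.pow_right_injective hq hcard)).symm
  have hord : orderOf φ * (Fintype.card Fq - 1) = Fintype.card Ff - 1 := by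
    rw [hcq, hcf, hφ]
    exact Nat.div_mul_cancel (by simpa using Nat.sub_dvd_pow_sub_pow q 1 f)
  have hcop : (Fintype.card Fqˣ).Coprime (Module.finrank Ff Fk) := by
    rwa [Fintype.card_units, hcq, hfinrank, Nat.coprime_comm]
  have hweight := sq_card_mul_card_filter_traceNorm_eq_and_trace_ne_zero hcop hψ hord
    (neg_ne_zero.2 ha) hb
  rw [hcq, hcf, hck, hfinrank, gaussPowSum, hφ, Nat.cast_pow, Nat.cast_pow] at hweight
  simp only [add_eq_zero_iff_eq_neg]
  rw [Nat.card_eq_fintype_card, Fintype.card_subtype]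
  refine eq_add_of_sq_mul_sub_one_mul_eq (mod_cast (zero_lt_one.trans hq).ne')
    (sub_ne_zero.2 (mod_cast hqf.ne')) hf hk ?_ hweight
  rintro rfl
  rw [pow_one, Nat.div_self (Nat.sub_pos_of_lt hq), Nat.sub_self,
    Icc_eq_empty (by omega), sum_empty]

/-- **Theorem 2, weight formula for `f > 1`.** Let `q` be a power of a
prime `p`, `f ∣ k`, `f > 1`, `gcd(k/f, q-1) = 1`, `a ∈ F_qˣ`, and
`D = {x ∈ F_{q^k} : Tr_{q^f/q}(x^{(q^k-1)/(q^f-1)}) + a = 0}`.  Let `χ₁` be the canonical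
additive character of `F_{q^f}` and `φ` a multiplicative character of `F_{q^f}ˣ` of order
`(q^f-1)/(q-1)`.  Then for every `b ∈ F_{q^k}ˣ`, in `ℂ`,
`w(c_b) = (q-1)q^{f+k-2}/(q^f-1) + ((-1)^{k/f-1}(q-1)q^{f-2}/(q^f-1)) ·
  ∑_{j=1}^{(q^f-1)/(q-1)-1} φ^j(-1) G(φ^j,χ₁)^{k/f-1} conj(φ^j)(b^{(q^k-1)/(q^f-1)})`.
Here `x^{(q^k-1)/(q^f-1)}` is the norm from `Fk` to `Ff` (hypothesis `hnorm`). -/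
theorem stmt14 (p e q f k : ℕ) [Fact p.Prime] (he : 0 < e) (hq : q = p ^ e)
    (hf : 1 < f) (hfk : f ∣ k) (hgcd : Nat.gcd (k / f) (q - 1) = 1)
    (Fq Ff Fk : Type) [Field Fq] [Field Ff] [Field Fk]
    [Fintype Fq] [Fintype Ff] [Fintype Fk]
    [Algebra Fq Ff] [Algebra Ff Fk] [Algebra Fq Fk] [IsScalarTower Fq Ff Fk]
    [Algebra (ZMod p) Ff]
    (hcq : Fintype.card Fq = q) (hcf : Fintype.card Ff = q ^ f)
    (hck : Fintype.card Fk = q ^ k)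
    (hnorm : ∀ x : Fk,
      algebraMap Ff Fk (Algebra.norm Ff x) = x ^ ((q ^ k - 1) / (q ^ f - 1)))
    (χ₁ : AddChar Ff ℂ)
    (hχ₁ : ∀ x : Ff, χ₁ x =
      Complex.exp (2 * Real.pi * Complex.I * ((Algebra.trace (ZMod p) Ff x).val : ℂ) / p))
    (φ : MulChar Ff ℂ) (hφ : orderOf φ = (q ^ f - 1) / (q - 1))
    (a : Fq) (ha : a ≠ 0) (b : Fk) (hb : b ≠ 0) :
    (Nat.card {d : Fk // Algebra.trace Fq Ff (Algebra.norm Ff d) + a = 0 ∧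
        Algebra.trace Fq Fk (b * d) ≠ 0} : ℂ)
      = ((q : ℂ) - 1) * (q : ℂ) ^ (f + k - 2) / ((q : ℂ) ^ f - 1) +
        (-1 : ℂ) ^ (k / f - 1) * ((q : ℂ) - 1) * (q : ℂ) ^ (f - 2) / ((q : ℂ) ^ f - 1) *
          ∑ j ∈ Finset.Icc 1 ((q ^ f - 1) / (q - 1) - 1),
            (φ ^ j) (-1) * gaussSum (φ ^ j) χ₁ ^ (k / f - 1) *
              (starRingEnd ℂ) ((φ ^ j) (Algebra.norm Ff b)) := by
  obtain ⟨ψ, hψ, rfl⟩ := TraceNormCode.exists_eq_traceChar_of_apply_eq_exp (E := Fq) hχ₁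
  simpa only [starRingEnd_apply, MulChar.star_apply'] using
    stmt14_general hgcd hcq hcf hck hψ hφ ha hb
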